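/- arXiv:2010.00653 — 2 statements merged into one kernel-verified Lean document; each statement's English description precedes it below -/
import Mathlib

section
/- Let n >= 1 and let I_n denote the set of involutions w in S_infty with w(i) = i for all i > n. For z in I_n with fixed points i_1 < i_2 < ... < i_k in [n], define FPF_n(z) to be the composition z * (i_1,n+1)(i_2,n+2)...(i_k,n+k) * c, where (a,b) denotes a transposition and c is the involution swapping n+k+2t-1 and n+k+2t for every t >= 1 and fixing all other points. Then FPF_n(z) belongs to I^FPF_infty for every z in I_n, and the map FPF_n is a bijection from I_n onto the set of those elements of I^FPF_infty that have no visible descent greater than n. -/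
namespace Paper

/-!
We model a permutation of the positive integers `{1, 2, 3, ...}` as an `Equiv.Perm ℕ`
that fixes `0`; all notions below refer only to positive inputs.
-/

/-- The rank `r_w(i,j) = #{a ∈ [i] : w(a) ∈ [j]}` of the `i × j` partial
permutation matrix of `w`, where `[k] = {1, ..., k}`. -/
def rnk (w : Equiv.Perm ℕ) (i j : ℕ) : ℕ :=
  ((Finset.Icc 1 i).filter fun a => w a ∈ Finset.Icc 1 j).card

/-- Right descent set `Des_R(w) = {i ≥ 1 : w(i) > w(i+1)}`. -/
def DesR (w : Equiv.Perm ℕ) : Set ℕ := {i | 1 ≤ i ∧ w (i + 1) < w i}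

/-- Left descent set `Des_L(w) = Des_R(w⁻¹)`. -/
def DesL (w : Equiv.Perm ℕ) : Set ℕ := DesR w⁻¹

/-- `S_∞`: permutations of the positive integers fixing all but finitely many points. -/
def SInfty : Set (Equiv.Perm ℕ) :=
  {w | w 0 = 0 ∧ Set.Finite {i : ℕ | w i ≠ i}}

/-- `S^{m,n}_∞ = {w ∈ S_∞ : Des_R(w) ⊆ [m], Des_L(w) ⊆ [n]}`. -/
def SmnInfty (m n : ℕ) : Set (Equiv.Perm ℕ) :=
  {w | w ∈ SInfty ∧ DesR w ⊆ Set.Icc 1 m ∧ DesL w ⊆ Set.Icc 1 n}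

/-- The Rothe diagram `D(w) = {(i,j) : 0 < j < w(i), 0 < i < w⁻¹(j)}`. -/
def Rothe (w : Equiv.Perm ℕ) : Set (ℕ × ℕ) :=
  {p | 0 < p.2 ∧ p.2 < w p.1 ∧ 0 < p.1 ∧ p.1 < w⁻¹ p.2}

/-- The function `1_FPF`, sending `i ↦ i - (-1)^i` on positive integers (it fixes `0`). -/
def oneFPF : ℕ → ℕ := fun i => if i % 2 = 1 then i + 1 else i - 1

/-- `I^FPF_∞`: fixed-point-free involutions of the positive integers agreeing with
`1_FPF` at all sufficiently large inputs. -/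
def IFPFInfty : Set (Equiv.Perm ℕ) :=
  {z | z 0 = 0 ∧ (∀ i, 1 ≤ i → z i ≠ i) ∧ z * z = 1 ∧ ∃ N, ∀ i, N ≤ i → z i = oneFPF i}

/-- The skew-symmetric Rothe diagram `D^ss(z) = {(i,j) : 0 < j < z(i), j < i < z(j)}`. -/
def Dss (z : Equiv.Perm ℕ) : Set (ℕ × ℕ) :=
  {p | 0 < p.2 ∧ p.2 < z p.1 ∧ p.2 < p.1 ∧ p.1 < z p.2}

/-- `FPF_n(I_n) = {z ∈ I^FPF_∞ : D^ss(z) ⊆ [n] × [n]}`. -/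
def FPFIn (n : ℕ) : Set (Equiv.Perm ℕ) :=
  {z | z ∈ IFPFInfty ∧ Dss z ⊆ Set.Icc 1 n ×ˢ Set.Icc 1 n}

/-- `ℓ_fpf(z) = |D^ss(z)|`. -/
noncomputable def ellFpf (z : Equiv.Perm ℕ) : ℕ := (Dss z).ncard

/-- Bruhat order on `I^FPF_∞`: reflexive-transitive closure of `z < (i,j) z (i,j)`
whenever `i < j` and `ℓ_fpf` goes up by exactly one. -/
def fpfBruhatLe (z y : Equiv.Perm ℕ) : Prop :=
  Relation.ReflTransGen
    (fun a b => ∃ i j : ℕ, 1 ≤ i ∧ i < j ∧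
      b = Equiv.swap i j * a * Equiv.swap i j ∧ ellFpf b = ellFpf a + 1) z y

/-- `i` is a visible descent of `z` if `i ≥ 1` and `z(i+1) < min(i, z(i))`. -/
def visibleDescent (z : Equiv.Perm ℕ) (i : ℕ) : Prop :=
  1 ≤ i ∧ z (i + 1) < min i (z i)

/-- `Ψ(z, p) = {(p,r) z (p,r) : r > p, ℓ_fpf((p,r) z (p,r)) = ℓ_fpf(z) + 1}`. -/
def PsiSet (z : Equiv.Perm ℕ) (p : ℕ) : Set (Equiv.Perm ℕ) :=
  {y | ∃ r : ℕ, p < r ∧ y = Equiv.swap p r * z * Equiv.swap p r ∧ ellFpf y = ellFpf z + 1}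

/-- The dominant component `dom(z) = {(i,j) : i, j ≥ 1, r_z(i,j) = 0}`. -/
def domSet (z : Equiv.Perm ℕ) : Set (ℕ × ℕ) :=
  {p | 1 ≤ p.1 ∧ 1 ≤ p.2 ∧ rnk z p.1 p.2 = 0}

/-- `(p, q)` is an outer corner of `dom(z)`. -/
def IsOuterCorner (z : Equiv.Perm ℕ) (p q : ℕ) : Prop :=
  1 ≤ p ∧ 1 ≤ q ∧ (p, q) ∉ domSet z ∧
    (p = 1 ∨ (p - 1, q) ∈ domSet z) ∧ (q = 1 ∨ (p, q - 1) ∈ domSet z)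

/-- `I_n`: involutions in `S_∞` fixing every `i > n`. -/
def InvolIn (n : ℕ) : Set (Equiv.Perm ℕ) :=
  {w | w 0 = 0 ∧ w * w = 1 ∧ ∀ i, n < i → w i = i}

/-- The fixed points of `z` lying in `[n]`. -/
def fixedPtsIn (n : ℕ) (z : Equiv.Perm ℕ) : Finset ℕ :=
  (Finset.Icc 1 n).filter fun i => z i = i

/-- The function swapping `m + 2t - 1` and `m + 2t` for every `t ≥ 1`, fixing all other points. -/
def tailSwapFun (m : ℕ) : ℕ → ℕ := fun i =>
  if i ≤ m then i else if (i - m) % 2 = 1 then i + 1 else i - 1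

theorem tailSwapFun_involutive (m : ℕ) : Function.Involutive (tailSwapFun m) := by
  intro i
  unfold tailSwapFun
  split_ifs <;> omega

/-- The involution swapping `m + 2t - 1` and `m + 2t` for every `t ≥ 1`. -/
def tailSwap (m : ℕ) : Equiv.Perm ℕ :=
  Function.Involutive.toPerm _ (tailSwapFun_involutive m)

/-- The fixed-point-free standardization `FPF_n(z) = z ⋅ (i_1,n+1)⋯(i_k,n+k) ⋅ c`,
where `i_1 < ⋯ < i_k` are the fixed points of `z` in `[n]` and `c` swaps
`n+k+2t-1, n+k+2t` for all `t ≥ 1`. -/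
noncomputable def fpfStd (n : ℕ) (z : Equiv.Perm ℕ) : Equiv.Perm ℕ :=
  z *
    (List.ofFn fun t : Fin (fixedPtsIn n z).card =>
      Equiv.swap ((fixedPtsIn n z).orderEmbOfFin rfl t) (n + (t : ℕ) + 1)).prod *
    tailSwap (n + (fixedPtsIn n z).card)

/-- `Mat^ss_n(K)`: skew-symmetric `n × n` matrices (transpose is the negative, zero diagonal).
Row/column index `a : Fin n` corresponds to the (1-indexed) row/column `a + 1`. -/
def MatSS (K : Type*) [CommRing K] (n : ℕ) : Set (Matrix (Fin n) (Fin n) K) :=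
  {A | A.transpose = -A ∧ ∀ i, A i i = 0}

/-- The skew-symmetric matrix Schubert variety
`X^ss_z = {A ∈ Mat^ss_n : rank A_{[i][j]} ≤ r_z(i,j) for all i, j ∈ [n]}`. -/
noncomputable def Xss (K : Type*) [Field K] (n : ℕ) (z : Equiv.Perm ℕ) :
    Set (Matrix (Fin n) (Fin n) K) :=
  {A | A ∈ MatSS K n ∧ ∀ (i j : ℕ) (hi : i ≤ n) (hj : j ≤ n), 1 ≤ i → 1 ≤ j →
    (A.submatrix (Fin.castLE hi) (Fin.castLE hj)).rank ≤ rnk z i j}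

/-- `#{(i,j) : i > j, j < z(i), i < z(j)}` for a permutation of `Fin N`
(the `0`-indexed version of `ℓ_fpf`). -/
def ellFpfFin {N : ℕ} (z : Equiv.Perm (Fin N)) : ℕ :=
  (Finset.univ.filter fun p : Fin N × Fin N => p.2 < p.1 ∧ p.2 < z p.1 ∧ p.1 < z p.2).card

/-- The Pfaffian of an `N × N` matrix:
`pf(A) = ∑_{z fpf involution of [N]} (-1)^{ℓ_fpf(z)} ∏_{z(i) < i} A_{z(i), i}`.
(The sum is empty, hence `0`, when `N` is odd.) -/
noncomputable def Pfaffian {R : Type*} [CommRing R] {N : ℕ} (A : Matrix (Fin N) (Fin N) R) : R :=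
  ∑ z ∈ Finset.univ.filter (fun z : Equiv.Perm (Fin N) => (∀ i, z i ≠ i) ∧ ∀ i, z (z i) = i),
    (-1 : R) ^ ellFpfFin z * ∏ i ∈ Finset.univ.filter (fun i : Fin N => z i < i), A (z i) i

/-- Index set for the variables `u_{ij}`, `n ≥ i > j ≥ 1`, of the coordinate ring
`R_n = K[Mat^ss_n]`; the variable `⟨(a, b), _⟩` is `u_{a+1, b+1}`. -/
abbrev SSVar (n : ℕ) : Type := {p : Fin n × Fin n // p.2 < p.1}

/-- The generic skew-symmetric matrix `U^ss` over `R_n`. -/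
noncomputable def Uss (K : Type*) [CommRing K] (n : ℕ) :
    Matrix (Fin n) (Fin n) (MvPolynomial (SSVar n) K) :=
  Matrix.of fun i j =>
    if h : j < i then MvPolynomial.X ⟨(i, j), h⟩
    else if h' : i < j then -MvPolynomial.X ⟨(j, i), h'⟩
    else 0

/-- The ideal of polynomials vanishing on a set `X`, where a point `A` is evaluated
via `ev A : σ → K`. -/
noncomputable def vanishingIdeal {K : Type*} [CommRing K] {σ M : Type*}
    (X : Set M) (ev : M → σ → K) : Ideal (MvPolynomial σ K) where
  carrier := {f | ∀ A ∈ X, MvPolynomial.eval (ev A) f = 0}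
  zero_mem' := by simp
  add_mem' := by
    intro f g hf hg
    simp only [Set.mem_setOf_eq] at *
    intro A hA
    rw [map_add, hf A hA, hg A hA, add_zero]
  smul_mem' := by
    intro c f hf
    simp only [Set.mem_setOf_eq] at *
    intro A hA
    rw [smul_eq_mul, map_mul, hf A hA, mul_zero]

/-- `I(X^ss_z) ⊆ R_n`, where `u_{ij}` is evaluated at `A` as `A_{ij}`. -/
noncomputable def IXss (K : Type*) [Field K] (n : ℕ) (z : Equiv.Perm ℕ) :
    Ideal (MvPolynomial (SSVar n) K) :=
  vanishingIdeal (Xss K n z) fun A v => A v.1.1 v.1.2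

/-- `pf(U^ss_{RR})` for a finite row/column set `R` (listed in increasing order). -/
noncomputable def pfUss (K : Type*) [CommRing K] {n : ℕ} (R : Finset (Fin n)) :
    MvPolynomial (SSVar n) K :=
  Pfaffian ((Uss K n).submatrix (fun s => R.orderEmbOfFin rfl s) fun t => R.orderEmbOfFin rfl t)

/-- The ideal `I^ss_z`, generated by the Pfaffians `pf(U^ss_{RR})` over all nonempty
even-size `R ⊆ [n]` such that `R ⊆ [i]` and `|R ∩ [j]| > r_z(i,j)` for some `i ≥ j`. -/
noncomputable def IssIdeal (K : Type*) [Field K] (n : ℕ) (z : Equiv.Perm ℕ) :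
    Ideal (MvPolynomial (SSVar n) K) :=
  Ideal.span {f : MvPolynomial (SSVar n) K | ∃ R : Finset (Fin n),
    R.Nonempty ∧ Even R.card ∧
    (∃ i j : ℕ, 1 ≤ j ∧ j ≤ i ∧ i ≤ n ∧ (∀ a ∈ R, (a : ℕ) + 1 ≤ i) ∧
      rnk z i j < (R.filter fun a : Fin n => (a : ℕ) + 1 ≤ j).card) ∧
    f = pfUss K R}

/-- The square-free monomial `u^ss_{AB}`: zero if `A ⊙ B` meets the diagonal, and otherwise
the product of the variables `u_{ij}` over the pairs `i > j` with `(i,j)` or `(j,i)` in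
`A ⊙ B = {(a_0, b_r), (a_1, b_{r-1}), ..., (a_r, b_0)}`. -/
noncomputable def ussMon (K : Type*) [CommRing K] {n : ℕ} (A B : Finset (Fin n)) :
    MvPolynomial (SSVar n) K :=
  if h : A.card = B.card then
    if ∃ t : Fin A.card, (A.orderEmbOfFin rfl t : Fin n) = B.orderEmbOfFin h.symm t.rev then 0
    else
      ∏ v ∈ Finset.univ.filter (fun v : SSVar n => ∃ t : Fin A.card,
          (A.orderEmbOfFin rfl t = v.1.1 ∧ B.orderEmbOfFin h.symm t.rev = v.1.2) ∨
          (A.orderEmbOfFin rfl t = v.1.2 ∧ B.orderEmbOfFin h.symm t.rev = v.1.1)),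
        MvPolynomial.X v
  else 0

/-- The monomial ideal `J^ss_r` of a symmetric rank table `r`, generated by the monomials
`u^ss_{AB}` with `A ⊆ [i]`, `B ⊆ [j]`, `|A| = |B| = r(i,j) + 1` for some `n ≥ i ≥ j ≥ 1`. -/
noncomputable def JssIdealOfTable (K : Type*) [CommRing K] (n : ℕ) (r : ℕ → ℕ → ℕ) :
    Ideal (MvPolynomial (SSVar n) K) :=
  Ideal.span {g : MvPolynomial (SSVar n) K | ∃ (i j : ℕ) (A B : Finset (Fin n)),
    1 ≤ j ∧ j ≤ i ∧ i ≤ n ∧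
    (∀ a ∈ A, (a : ℕ) + 1 ≤ i) ∧ (∀ b ∈ B, (b : ℕ) + 1 ≤ j) ∧
    A.card = r i j + 1 ∧ B.card = r i j + 1 ∧ g = ussMon K A B}

/-- `J^ss_z = J^ss_{r_z}`. -/
noncomputable def JssIdeal (K : Type*) [CommRing K] (n : ℕ) (z : Equiv.Perm ℕ) :
    Ideal (MvPolynomial (SSVar n) K) :=
  JssIdealOfTable K n (rnk z)

/-- Total degree of a monomial (exponent vector). -/
def totalDeg {σ : Type*} (m : σ →₀ ℕ) : ℕ := m.sum fun _ e => e

/-- The lexicographic order on the variables `u_{ij}` by the pair `(i, j)`. -/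
def varLT {n : ℕ} (v w : SSVar n) : Prop :=
  v.1.1 < w.1.1 ∨ (v.1.1 = w.1.1 ∧ v.1.2 < w.1.2)

/-- The (graded) reverse lexicographic term order on monomials of `R_n`:
`m₁ < m₂` iff `deg m₁ < deg m₂`, or the degrees agree and the lexicographically largest
variable with different exponents has strictly larger exponent in `m₁`. -/
def revlexLT {n : ℕ} (m₁ m₂ : SSVar n →₀ ℕ) : Prop :=
  totalDeg m₁ < totalDeg m₂ ∨
    (totalDeg m₁ = totalDeg m₂ ∧ ∃ v, m₂ v < m₁ v ∧ ∀ w, varLT v w → m₁ w = m₂ w)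

/-- The initial ideal of `I` with respect to a strict term order `lt`: the ideal
generated by the leading monomials `init(f)` of the nonzero `f ∈ I`. -/
noncomputable def initIdeal {K : Type*} [CommRing K] {σ : Type*}
    (lt : (σ →₀ ℕ) → (σ →₀ ℕ) → Prop) (I : Ideal (MvPolynomial σ K)) :
    Ideal (MvPolynomial σ K) :=
  Ideal.span {g : MvPolynomial σ K | ∃ f ∈ I, f ≠ 0 ∧ ∃ m : σ →₀ ℕ, m ∈ f.support ∧
    (∀ m' ∈ f.support, m' ≠ m → lt m' m) ∧ g = MvPolynomial.monomial m (1 : K)}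

/-- A term order on the monomials of a polynomial ring: a linear order in which `1` is
the unique minimum and multiplication by a fixed monomial preserves order. -/
structure TermOrder (σ : Type*) where
  le : (σ →₀ ℕ) → (σ →₀ ℕ) → Prop
  trans : ∀ a b c, le a b → le b c → le a c
  antisymm : ∀ a b, le a b → le b a → a = b
  total : ∀ a b, le a b ∨ le b a
  zero_le : ∀ a, le 0 a
  add_le_add_right : ∀ a b c, le a b → le (a + c) (b + c)

/-- The initial ideal of `I` with respect to a term order `τ`. -/
noncomputable def initIdealLe {K : Type*} [CommRing K] {σ : Type*}
    (τ : TermOrder σ) (I : Ideal (MvPolynomial σ K)) : Ideal (MvPolynomial σ K) :=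
  Ideal.span {g : MvPolynomial σ K | ∃ f ∈ I, f ≠ 0 ∧ ∃ m : σ →₀ ℕ, m ∈ f.support ∧
    (∀ m' ∈ f.support, τ.le m' m) ∧ g = MvPolynomial.monomial m (1 : K)}

/-- An ideal is homogeneous (w.r.t. total degree) iff it contains all homogeneous
components of its elements. -/
def IsHomogIdeal {K : Type*} [CommSemiring K] {σ : Type*}
    (I : Ideal (MvPolynomial σ K)) : Prop :=
  ∀ f ∈ I, ∀ d : ℕ, MvPolynomial.homogeneousComponent d f ∈ I

/-- The reading order on boxes: rows top to bottom, each row right to left. -/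
def pdRel (p q : ℕ × ℕ) : Prop := p.1 < q.1 ∨ (p.1 = q.1 ∧ q.2 ≤ p.2)

instance : DecidableRel pdRel := fun p q => by unfold pdRel; infer_instance

instance : IsTrans (ℕ × ℕ) pdRel :=
  ⟨fun a b c hab hbc => by unfold pdRel at *; omega⟩

instance : IsAntisymm (ℕ × ℕ) pdRel :=
  ⟨fun a b hab hba => by
    unfold pdRel at hab hba
    exact Prod.ext_iff.mpr ⟨by omega, by omega⟩⟩

instance : IsTotal (ℕ × ℕ) pdRel :=
  ⟨fun a b => by unfold pdRel; omega⟩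

/-- The pipe dream reading word of a finite set `D` of boxes: the letters `i + j - 1`
over `(i, j) ∈ D`, in the order making `(i, -j)` increase lexicographically. -/
def pdWord (D : Finset (ℕ × ℕ)) : List ℕ :=
  (D.sort pdRel).map fun p => p.1 + p.2 - 1

/-- The product `s_{i_1} s_{i_2} ⋯ s_{i_l}` of simple transpositions. -/
def wordProd (l : List ℕ) : Equiv.Perm ℕ :=
  (l.map fun i => Equiv.swap i (i + 1)).prod

/-- `l` is a reduced word for `w`: a minimal-length word of positive letters whose
product of simple transpositions is `w`. -/
def IsReducedWordOf (w : Equiv.Perm ℕ) (l : List ℕ) : Prop :=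
  (∀ a ∈ l, 1 ≤ a) ∧ wordProd l = w ∧
    ∀ l' : List ℕ, (∀ a ∈ l', 1 ≤ a) → wordProd l' = w → l.length ≤ l'.length

/-- The set `RP(w)` of reduced pipe dreams for `w`. -/
def RP (w : Equiv.Perm ℕ) : Set (Finset (ℕ × ℕ)) :=
  {D | (∀ p ∈ D, 1 ≤ p.1 ∧ 1 ≤ p.2) ∧ IsReducedWordOf w (pdWord D)}

/-- `I^FPF_m`: involutions in `S_∞` that are fixed-point-free on `[m]` and fix
all `i > m`. -/
def IFPFm (m : ℕ) : Set (Equiv.Perm ℕ) :=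
  {y | y 0 = 0 ∧ y * y = 1 ∧ (∀ i, 1 ≤ i → i ≤ m → y i ≠ i) ∧ ∀ i, m < i → y i = i}

/-- `z = FPF_m(y)`: `z` agrees with `y` on `[m]` and swaps `m + 2k - 1, m + 2k`
for all `k ≥ 1`. -/
def IsFPFStdOf (m : ℕ) (y z : Equiv.Perm ℕ) : Prop :=
  (∀ i, i ≤ m → z i = y i) ∧
    ∀ k : ℕ, z (m + 2 * k + 1) = m + 2 * k + 2 ∧ z (m + 2 * k + 2) = m + 2 * k + 1

/-- The set `FP(z)` of fpf-involution pipe dreams for `z ∈ I^FPF_∞`. -/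
def FP (z : Equiv.Perm ℕ) : Set (Finset (ℕ × ℕ)) :=
  {E | ∃ (m : ℕ) (y : Equiv.Perm ℕ) (D : Finset (ℕ × ℕ)), Even m ∧ y ∈ IFPFm m ∧
    IsFPFStdOf m y z ∧ D ∈ RP y ∧ D.image Prod.swap = D ∧
    E = D.filter fun p => p.2 < p.1}

/-- The minor `det(U_{AB})` of the generic `m × n` matrix `U`, with rows `A` and
columns `B` listed in increasing order. -/
noncomputable def genMinor (K : Type*) [CommRing K] {m n : ℕ}
    (A : Finset (Fin m)) (B : Finset (Fin n)) (h : A.card = B.card) :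
    MvPolynomial (Fin m × Fin n) K :=
  (Matrix.of fun s t : Fin A.card =>
    (MvPolynomial.X (A.orderEmbOfFin rfl s, B.orderEmbOfFin h.symm t) :
      MvPolynomial (Fin m × Fin n) K)).det

/-- The antidiagonal monomial `u_{AB} = ∏_{(a,b) ∈ A ⊙ B} u_{ab}`. -/
noncomputable def genMon (K : Type*) [CommRing K] {m n : ℕ}
    (A : Finset (Fin m)) (B : Finset (Fin n)) (h : A.card = B.card) :
    MvPolynomial (Fin m × Fin n) K :=
  ∏ t : Fin A.card, MvPolynomial.X (A.orderEmbOfFin rfl t, B.orderEmbOfFin h.symm t.rev)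

/-- The exponent vector of the antidiagonal monomial `u_{AB}`. -/
noncomputable def antidiagExp {m n : ℕ} (A : Finset (Fin m)) (B : Finset (Fin n))
    (h : A.card = B.card) : (Fin m × Fin n) →₀ ℕ :=
  ∑ t : Fin A.card, Finsupp.single (A.orderEmbOfFin rfl t, B.orderEmbOfFin h.symm t.rev) 1

/-- The ideal `I_w`, generated by the minors `det(U_{AB})` with `A ⊆ [i]`, `B ⊆ [j]`,
`|A| = |B| = r_w(i,j) + 1` for some `(i,j) ∈ [m] × [n]`. -/
noncomputable def IwIdeal (K : Type*) [Field K] (m n : ℕ) (w : Equiv.Perm ℕ) :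
    Ideal (MvPolynomial (Fin m × Fin n) K) :=
  Ideal.span {g : MvPolynomial (Fin m × Fin n) K |
    ∃ (i j : ℕ) (A : Finset (Fin m)) (B : Finset (Fin n)) (h : A.card = B.card),
      1 ≤ i ∧ i ≤ m ∧ 1 ≤ j ∧ j ≤ n ∧ (∀ a ∈ A, (a : ℕ) + 1 ≤ i) ∧
      (∀ b ∈ B, (b : ℕ) + 1 ≤ j) ∧ A.card = rnk w i j + 1 ∧ g = genMinor K A B h}

/-- The monomial ideal `J_w`, generated by the monomials `u_{AB}` with `A ⊆ [i]`,
`B ⊆ [j]`, `|A| = |B| = r_w(i,j) + 1` for some `(i,j) ∈ [m] × [n]`. -/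
noncomputable def JwIdeal (K : Type*) [Field K] (m n : ℕ) (w : Equiv.Perm ℕ) :
    Ideal (MvPolynomial (Fin m × Fin n) K) :=
  Ideal.span {g : MvPolynomial (Fin m × Fin n) K |
    ∃ (i j : ℕ) (A : Finset (Fin m)) (B : Finset (Fin n)) (h : A.card = B.card),
      1 ≤ i ∧ i ≤ m ∧ 1 ≤ j ∧ j ≤ n ∧ (∀ a ∈ A, (a : ℕ) + 1 ≤ i) ∧
      (∀ b ∈ B, (b : ℕ) + 1 ≤ j) ∧ A.card = rnk w i j + 1 ∧ g = genMon K A B h}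

/-- The matrix Schubert variety
`X_w = {A ∈ Mat_{m×n} : rank A_{[i][j]} ≤ r_w(i,j) for all (i,j) ∈ [m] × [n]}`. -/
noncomputable def Xw (K : Type*) [Field K] (m n : ℕ) (w : Equiv.Perm ℕ) :
    Set (Matrix (Fin m) (Fin n) K) :=
  {A | ∀ (i j : ℕ) (hi : i ≤ m) (hj : j ≤ n), 1 ≤ i → 1 ≤ j →
    (A.submatrix (Fin.castLE hi) (Fin.castLE hj)).rank ≤ rnk w i j}

/-- `I(X_w)`: the ideal of polynomials vanishing on `X_w`. -/
noncomputable def IXw (K : Type*) [Field K] (m n : ℕ) (w : Equiv.Perm ℕ) :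
    Ideal (MvPolynomial (Fin m × Fin n) K) :=
  vanishingIdeal (Xw K m n w) fun A v => A v.1 v.2

/-- The variable `u_{pq}` (with `1 ≤ q < p ≤ n`) of `R_n`. -/
def ssvar {n : ℕ} (p q : ℕ) (hp : p ≤ n) (hq : 1 ≤ q) (hqp : q < p) : SSVar n :=
  ⟨(⟨p - 1, by omega⟩, ⟨q - 1, by omega⟩), Fin.mk_lt_mk.mpr (by omega)⟩

/-- Index set for the variables `u_{ij}`, `i > j ≥ 1`, over all positive integers. -/
abbrev PVar : Type := {p : ℕ × ℕ // 1 ≤ p.2 ∧ p.2 < p.1}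

/-- The generic skew-symmetric array `U^ss` over the positive integers:
`u_{xy}` if `x > y`, `-u_{yx}` if `x < y`, `0` if `x = y`. -/
noncomputable def UssP (K : Type*) [CommRing K] (x y : ℕ) : MvPolynomial PVar K :=
  if h : 1 ≤ y ∧ y < x then MvPolynomial.X ⟨(x, y), h⟩
  else if h' : 1 ≤ x ∧ x < y then -MvPolynomial.X ⟨(y, x), h'⟩
  else 0

/-- `pf(U^ss_{RR})` for a finite set `R` of positive integers. -/
noncomputable def pfUssP (K : Type*) [CommRing K] (R : Finset ℕ) : MvPolynomial PVar K :=
  Pfaffian (Matrix.of fun s t : Fin R.card =>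
    UssP K (R.orderEmbOfFin rfl s) (R.orderEmbOfFin rfl t))

/-- `g_{AB}`: the Pfaffian of the `(|B|+|A|) × (|B|+|A|)` skew-symmetric matrix whose
rows and columns are labeled by `B` (increasing) followed by `A` (increasing), with
entry `U^ss_{xy}` at a position labeled `(x, y)`, except that the entry is `0` when
both labels come from the `A`-block. -/
noncomputable def gAB (K : Type*) [CommRing K] (A B : Finset ℕ) : MvPolynomial PVar K :=
  Pfaffian ((Matrix.of fun p q : Fin B.card ⊕ Fin A.card =>
      match p, q with
      | Sum.inl s, Sum.inl t => UssP K (B.orderEmbOfFin rfl s) (B.orderEmbOfFin rfl t)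
      | Sum.inl s, Sum.inr t => UssP K (B.orderEmbOfFin rfl s) (A.orderEmbOfFin rfl t)
      | Sum.inr s, Sum.inl t => UssP K (A.orderEmbOfFin rfl s) (B.orderEmbOfFin rfl t)
      | Sum.inr _, Sum.inr _ => (0 : MvPolynomial PVar K)).submatrix
    finSumFinEquiv.symm finSumFinEquiv.symm)

/-- The exponent of the sign `⟨T, S⟩ = (-1)^{|S||T| + C(|S|,2) + ∑ of the (1-indexed)
positions in the increasing enumeration of `T` occupied by elements of `S`}`. -/
def setSgnExp (T S : Finset ℕ) : ℕ :=
  S.card * T.card + Nat.choose S.card 2 +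
    ∑ t : Fin T.card, if T.orderEmbOfFin rfl t ∈ S then (t : ℕ) + 1 else 0

/-!
`FPF_n(z)` is a product of three disjoint involutions, moving respectively the non-fixed points of
`z`, the fixed points of `z` in `[n]` together with `n + 1, …, n + k`, and the points beyond
`n + k`. Hence it is an involution, and no positive integer is fixed by all three factors. It
agrees with `1_FPF` eventually because `n + k` is even, the non-fixed points of `z` in `[n]`
coming in pairs.

The inverse map removes every cycle meeting the points beyond `n`. To see that it is one, let `y`
be a fixed-point-free involution without visible descents beyond `n`. If `n < i < j` and
`y j + 1 < j`, then descending from `j` to `i` gives `y i < y j`. This has two consequences: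
points beyond `n` matched with each other are adjacent, and the points beyond `n` matched into
`[n]` form an initial interval `n + 1, …, n + k` on which `y` is increasing. So `y` is determined
by its cycles inside `[n]`, in exactly the way prescribed by `FPF_n`.
-/

open Equiv Equiv.Perm Function

section ProductsOfDisjointPermutations

variable {α : Type*}

theorem involutive_of_mul_self_eq_one {f : Perm α} (hf : f * f = 1) : Involutive f :=
  DFunLike.congr_fun hf

theorem list_prod_apply_eq_self {l : List (Perm α)} {x : α} (h : ∀ f ∈ l, f x = x) :
    l.prod x = x :=
  list_prod_mem (S := MulAction.stabilizer (Perm α) x) h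

theorem list_prod_apply_of_mem {l : List (Perm α)} (hl : l.Pairwise Disjoint) {f : Perm α}
    (hf : f ∈ l) {x : α} (hx : f x ≠ x) : l.prod x = f x := by
  induction l with
  | nil => cases hf
  | cons g l ih =>
    obtain ⟨hg, hl⟩ := List.pairwise_cons.1 hl
    rw [List.prod_cons, Perm.mul_apply]
    rcases List.mem_cons.1 hf with rfl | hf
    · rw [(disjoint_prod_right l hg x).resolve_left hx]
    · rw [ih hl hf]
      exact (hg f hf (f x)).resolve_right (f.injective.ne hx)

theorem mul_mul_mul_eq_one_of_commute {M : Type*} [Monoid M] {a b : M} (hab : Commute a b)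
    (ha : a * a = 1) (hb : b * b = 1) : a * b * (a * b) = 1 := by
  rw [hab.symm.mul_mul_mul_comm, ha, hb, one_mul]

theorem list_prod_mul_self_eq_one {M : Type*} [Monoid M] {l : List M} (hl : l.Pairwise Commute)
    (h : ∀ a ∈ l, a * a = 1) : l.prod * l.prod = 1 := by
  induction l with
  | nil => simp
  | cons a l ih =>
    obtain ⟨ha, hl⟩ := List.pairwise_cons.1 hl
    obtain ⟨haa, h⟩ := List.forall_mem_cons.1 h
    rw [List.prod_cons]
    exact mul_mul_mul_eq_one_of_commute (Commute.list_prod_right l a ha) haa (ih hl h)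

variable [DecidableEq α] {k : ℕ} {a b : Fin k → α}

/-- The product `(a_0 b_0)(a_1 b_1) ⋯ (a_{k-1} b_{k-1})` of transpositions. -/
def swapProd (a b : Fin k → α) : Perm α := (List.ofFn fun t => swap (a t) (b t)).prod

theorem pairwise_disjoint_swaps (hab : Injective (Sum.elim a b)) :
    (List.ofFn fun t => swap (a t) (b t)).Pairwise Disjoint := by
  refine List.pairwise_ofFn.2 fun i j hij => disjoint_swap_swap ?_
  obtain ⟨ha, hb, hne⟩ := Sum.elim_injective.1 hab
  simp [ha.eq_iff, hb.eq_iff, hne, (hne _ _).symm, hij.ne]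

theorem swapProd_mul_self (hab : Injective (Sum.elim a b)) :
    swapProd a b * swapProd a b = 1 :=
  list_prod_mul_self_eq_one ((pairwise_disjoint_swaps hab).imp Disjoint.commute)
    (List.forall_mem_ofFn_iff.2 fun _ => swap_mul_self _ _)

theorem swapProd_apply_right (hab : Injective (Sum.elim a b)) (t : Fin k) :
    swapProd a b (b t) = a t := by
  have hne : a t ≠ b t := hab.ne Sum.inl_ne_inr
  rw [swapProd, list_prod_apply_of_mem (pairwise_disjoint_swaps hab) (List.mem_ofFn.2 ⟨t, rfl⟩),
    swap_apply_right]
  rwa [swap_apply_right]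

theorem swapProd_apply_of_ne {x : α} (ha : ∀ t, x ≠ a t) (hb : ∀ t, x ≠ b t) :
    swapProd a b x = x :=
  list_prod_apply_eq_self
    (List.forall_mem_ofFn_iff.2 fun t => swap_apply_of_ne_of_ne (ha t) (hb t))

end ProductsOfDisjointPermutations

section Intervals

theorem even_card_add_card_filter_fixed {α : Type*} [DecidableEq α] {f : α → α}
    (hf : Involutive f) {s : Finset α} (hs : ∀ x ∈ s, f x ∈ s) :
    Even (s.card + (s.filter fun x => f x = x).card) := by
  have hmoved : Even (s.filter fun x => f x ≠ x).card := by
    have hsum : ∑ _x ∈ s.filter (fun x => f x ≠ x), (1 : ZMod 2) = 0 :=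
      Finset.sum_involution (fun x _ => f x) (fun _ _ => by decide)
        (fun x hx _ => (Finset.mem_filter.1 hx).2)
        (fun x hx => by
          obtain ⟨hxs, hne⟩ := Finset.mem_filter.1 hx
          exact Finset.mem_filter.2 ⟨hs x hxs, hf.injective.ne hne⟩)
        (fun x _ => hf x)
    rw [Finset.sum_const, nsmul_one] at hsum
    exact ZMod.natCast_eq_zero_iff_even.1 hsum
  have hsplit := Finset.card_filter_add_card_filter_not (s := s) fun x => f x = x
  grind

theorem eq_Ioc_of_forall_Ioc_subset {n : ℕ} {s : Finset ℕ}
    (hs : ∀ j ∈ s, n < j ∧ Finset.Ioc n j ⊆ s) : s = Finset.Ioc n (n + s.card) := by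
  refine Finset.eq_of_subset_of_card_le (fun j hj => ?_) (by simp)
  obtain ⟨hnj, hsub⟩ := hs j hj
  have hcard := Finset.card_le_card hsub
  rw [Nat.card_Ioc] at hcard
  exact Finset.mem_Ioc.2 ⟨hnj, by omega⟩

theorem exists_fin_add_one_eq {n k x : ℕ} (hx : x ∈ Set.Ioc n (n + k)) :
    ∃ t : Fin k, n + (t : ℕ) + 1 = x := by
  obtain ⟨hnx, hxk⟩ := hx
  exact ⟨⟨x - n - 1, by omega⟩, by dsimp only; omega⟩

end Intervals

section TailSwap

variable {m : ℕ}

theorem tailSwap_apply_of_le {x : ℕ} (hx : x ≤ m) : tailSwap m x = x :=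
  if_pos hx

theorem tailSwap_apply_ne_of_lt {x : ℕ} (hx : m < x) : tailSwap m x ≠ x := by
  change tailSwapFun m x ≠ x
  grind [tailSwapFun]

theorem lt_tailSwap_apply {x : ℕ} (hx : m < x) : m < tailSwap m x := by
  change m < tailSwapFun m x
  grind [tailSwapFun]

theorem le_tailSwap_apply_add_one (x : ℕ) : x ≤ tailSwap m x + 1 := by
  change x ≤ tailSwapFun m x + 1
  grind [tailSwapFun]

theorem tailSwap_mul_self : tailSwap m * tailSwap m = 1 :=
  Equiv.ext (tailSwapFun_involutive m)

theorem tailSwap_apply_eq_oneFPF (hm : Even m) {x : ℕ} (hx : m < x) :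
    tailSwap m x = oneFPF x := by
  change tailSwapFun m x = oneFPF x
  grind [tailSwapFun, oneFPF]

theorem eq_tailSwap_apply_of_adjacent {y : ℕ → ℕ} (hy : Involutive y)
    (hmaps : ∀ j, m < j → m < y j) (hadj : ∀ j, m < j → y j = j + 1 ∨ y j + 1 = j) {j : ℕ}
    (hj : m < j) : y j = tailSwap m j := by
  change y j = tailSwapFun m j
  induction j using Nat.strong_induction_on with
  | _ j ih =>
    by_cases hodd : (j - m) % 2 = 1
    · rw [tailSwapFun, if_neg hj.not_ge, if_pos hodd]
      refine (hadj j hj).resolve_right fun hlow => ?_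
      have hpred : y (y j) = tailSwapFun m (y j) := ih (y j) (by omega) (hmaps j hj)
      rw [hy j] at hpred
      grind [tailSwapFun]
    · have hpred : y (j - 1) = tailSwapFun m (j - 1) := ih (j - 1) (by omega) (by omega)
      have hval : tailSwapFun m (j - 1) = j := by grind [tailSwapFun]
      calc
        y j = y (y (j - 1)) := by rw [hpred, hval]
        _ = j - 1 := hy _
        _ = tailSwapFun m j := by grind [tailSwapFun]

end TailSwap

section Standardization

variable {n : ℕ} {z : Perm ℕ}

theorem InvolIn.apply_mem_Icc (hz : z ∈ InvolIn n) {x : ℕ} (hx : x ∈ Finset.Icc 1 n) :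
    z x ∈ Finset.Icc 1 n := by
  obtain ⟨hz0, -, hfix⟩ := hz
  have hne_zero : z x ≠ 0 := fun h => by
    have := z.injective (h.trans hz0.symm)
    grind
  have hle : z x ≤ n := by
    by_contra! h
    have := z.injective (hfix _ h)
    grind
  grind

theorem even_add_card_fixedPtsIn (hz : z ∈ InvolIn n) : Even (n + (fixedPtsIn n z).card) := by
  simpa only [Nat.card_Icc, Nat.add_sub_cancel] using!
    even_card_add_card_filter_fixed (involutive_of_mul_self_eq_one hz.2.1)
      fun _ => InvolIn.apply_mem_Icc hz

/-- The factor `(i_1, n + 1) ⋯ (i_k, n + k)` of `FPF_n(z)`. -/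
noncomputable def fixedPtSwap (n : ℕ) (z : Perm ℕ) : Perm ℕ :=
  swapProd ((fixedPtsIn n z).orderEmbOfFin rfl) fun t => n + t + 1

theorem fpfStd_eq (n : ℕ) (z : Perm ℕ) :
    fpfStd n z = z * fixedPtSwap n z * tailSwap (n + (fixedPtsIn n z).card) :=
  rfl

theorem mem_fixedPtsIn {x : ℕ} : x ∈ fixedPtsIn n z ↔ (1 ≤ x ∧ x ≤ n) ∧ z x = x := by
  simp [fixedPtsIn]

theorem orderEmbOfFin_fixedPtsIn_le (t : Fin (fixedPtsIn n z).card) :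
    (fixedPtsIn n z).orderEmbOfFin rfl t ≤ n :=
  (mem_fixedPtsIn.1 (Finset.orderEmbOfFin_mem _ _ t)).1.2

theorem injective_fixedPtSwap_entries (n : ℕ) (z : Perm ℕ) :
    Injective (Sum.elim ((fixedPtsIn n z).orderEmbOfFin rfl)
      fun t : Fin (fixedPtsIn n z).card => n + (t : ℕ) + 1) :=
  Sum.elim_injective.2 ⟨(Finset.orderEmbOfFin _ _).injective, fun _ _ h => Fin.ext (by grind),
    fun s t => by have := orderEmbOfFin_fixedPtsIn_le s; omega⟩

theorem fixedPtSwap_mul_self : fixedPtSwap n z * fixedPtSwap n z = 1 :=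
  swapProd_mul_self (injective_fixedPtSwap_entries n z)

theorem fixedPtSwap_apply_add (t : Fin (fixedPtsIn n z).card) :
    fixedPtSwap n z (n + t + 1) = (fixedPtsIn n z).orderEmbOfFin rfl t :=
  swapProd_apply_right (injective_fixedPtSwap_entries n z) t

theorem fixedPtSwap_apply_of_notMem {x : ℕ} (hfix : x ∉ fixedPtsIn n z)
    (hIoc : x ∉ Set.Ioc n (n + (fixedPtsIn n z).card)) : fixedPtSwap n z x = x :=
  swapProd_apply_of_ne (fun t h => hfix (h ▸ Finset.orderEmbOfFin_mem _ _ t))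
    fun t h => hIoc (by rw [h, Set.mem_Ioc]; omega)

theorem fixedPtSwap_apply_le {x : ℕ} (hx : x ∈ Set.Ioc n (n + (fixedPtsIn n z).card)) :
    fixedPtSwap n z x ≤ n := by
  obtain ⟨t, rfl⟩ : ∃ t : Fin (fixedPtsIn n z).card, n + (t : ℕ) + 1 = x :=
    exists_fin_add_one_eq hx
  rw [fixedPtSwap_apply_add]
  exact orderEmbOfFin_fixedPtsIn_le t

theorem lt_fixedPtSwap_apply {x : ℕ} (hx : x ∈ fixedPtsIn n z) : n < fixedPtSwap n z x := by
  obtain ⟨t, rfl⟩ : x ∈ Set.range ((fixedPtsIn n z).orderEmbOfFin rfl) := by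
    rwa [Finset.range_orderEmbOfFin]
  rw [← fixedPtSwap_apply_add, involutive_of_mul_self_eq_one fixedPtSwap_mul_self]
  omega

theorem disjoint_fixedPtSwap (hz : z ∈ InvolIn n) : Disjoint z (fixedPtSwap n z) := by
  intro x
  by_cases hfix : x ∈ fixedPtsIn n z
  · exact .inl (mem_fixedPtsIn.1 hfix).2
  by_cases hx : n < x
  · exact .inl (hz.2.2 x hx)
  · exact .inr (fixedPtSwap_apply_of_notMem hfix fun h => hx h.1)

theorem disjoint_tailSwap (hz : z ∈ InvolIn n) :
    Disjoint (z * fixedPtSwap n z) (tailSwap (n + (fixedPtsIn n z).card)) := by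
  intro x
  by_cases hx : x ≤ n + (fixedPtsIn n z).card
  · exact .inr (tailSwap_apply_of_le hx)
  · have hfix : x ∉ fixedPtsIn n z := fun h => by grind [mem_fixedPtsIn]
    exact .inl ((disjoint_fixedPtSwap hz).mul_apply_eq_iff.2
      ⟨hz.2.2 x (by omega), fixedPtSwap_apply_of_notMem hfix fun h => hx h.2⟩)

theorem fpfStd_mul_self (hz : z ∈ InvolIn n) : fpfStd n z * fpfStd n z = 1 :=
  mul_mul_mul_eq_one_of_commute (disjoint_tailSwap hz).commute
    (mul_mul_mul_eq_one_of_commute (disjoint_fixedPtSwap hz).commute hz.2.1 fixedPtSwap_mul_self)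
    tailSwap_mul_self

theorem fpfStd_apply_ne (hz : z ∈ InvolIn n) {x : ℕ} (hx : 1 ≤ x) : fpfStd n z x ≠ x := by
  rw [fpfStd_eq, Ne, (disjoint_tailSwap hz).mul_apply_eq_iff,
    (disjoint_fixedPtSwap hz).mul_apply_eq_iff]
  rintro ⟨⟨hz_fixes, hswap_fixes⟩, htail_fixes⟩
  have hx_le : x ≤ n + (fixedPtsIn n z).card := by
    by_contra! h
    exact tailSwap_apply_ne_of_lt h htail_fixes
  by_cases hxn : x ≤ n
  · have := lt_fixedPtSwap_apply (mem_fixedPtsIn.2 ⟨⟨hx, hxn⟩, hz_fixes⟩)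
    omega
  · have := fixedPtSwap_apply_le (z := z) ⟨not_le.1 hxn, hx_le⟩
    omega

theorem fpfStd_apply_of_le {x : ℕ} (hx : x ≤ n) :
    fpfStd n z x = z (fixedPtSwap n z x) := by
  rw [fpfStd_eq, Perm.mul_apply, tailSwap_apply_of_le (by omega), Perm.mul_apply]

theorem fpfStd_apply_of_notMem {x : ℕ} (hx : x ≤ n) (hfix : x ∉ fixedPtsIn n z) :
    fpfStd n z x = z x := by
  rw [fpfStd_apply_of_le hx, fixedPtSwap_apply_of_notMem hfix fun h => by grind]

theorem lt_fpfStd_apply (hz : z ∈ InvolIn n) {x : ℕ} (hx : x ∈ fixedPtsIn n z) :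
    n < fpfStd n z x := by
  have hlt := lt_fixedPtSwap_apply hx
  rwa [fpfStd_apply_of_le (mem_fixedPtsIn.1 hx).1.2, hz.2.2 _ hlt]

theorem fpfStd_apply_add (t : Fin (fixedPtsIn n z).card) :
    fpfStd n z (n + t + 1) = (fixedPtsIn n z).orderEmbOfFin rfl t := by
  rw [fpfStd_eq, Perm.mul_apply, tailSwap_apply_of_le (by omega), Perm.mul_apply,
    fixedPtSwap_apply_add]
  exact (mem_fixedPtsIn.1 (Finset.orderEmbOfFin_mem _ _ t)).2

theorem fpfStd_apply_of_lt (hz : z ∈ InvolIn n) {x : ℕ}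
    (hx : n + (fixedPtsIn n z).card < x) :
    fpfStd n z x = tailSwap (n + (fixedPtsIn n z).card) x := by
  rw [fpfStd_eq, Perm.mul_apply]
  refine (disjoint_tailSwap hz _).resolve_right (tailSwap_apply_ne_of_lt ?_)
  exact lt_tailSwap_apply hx

theorem fpfStd_mem_IFPFInfty (hz : z ∈ InvolIn n) : fpfStd n z ∈ IFPFInfty := by
  have hzero : fpfStd n z 0 = 0 := by
    rw [fpfStd_apply_of_notMem (Nat.zero_le n) fun h => by grind [mem_fixedPtsIn], hz.1]
  refine ⟨hzero, fun x => fpfStd_apply_ne hz, fpfStd_mul_self hz,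
    n + (fixedPtsIn n z).card + 1, fun x hx => ?_⟩
  rw [fpfStd_apply_of_lt hz hx, tailSwap_apply_eq_oneFPF (even_add_card_fixedPtsIn hz) hx]

theorem strictMonoOn_fpfStd (n : ℕ) (z : Perm ℕ) :
    StrictMonoOn (fpfStd n z) (Set.Ioc n (n + (fixedPtsIn n z).card)) := by
  intro i hi j hj hij
  obtain ⟨s, rfl⟩ := exists_fin_add_one_eq hi
  obtain ⟨t, rfl⟩ := exists_fin_add_one_eq hj
  rw [fpfStd_apply_add, fpfStd_apply_add, OrderEmbedding.lt_iff_lt]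
  omega

theorem le_of_visibleDescent_fpfStd (hz : z ∈ InvolIn n) {i : ℕ}
    (hi : visibleDescent (fpfStd n z) i) : i ≤ n := by
  by_contra! hni
  obtain ⟨-, hdesc⟩ := hi
  obtain ⟨hlt_self, hlt_apply⟩ := lt_min_iff.1 hdesc
  by_cases hmid : i + 1 ≤ n + (fixedPtsIn n z).card
  · have := strictMonoOn_fpfStd n z ⟨hni, by omega⟩ ⟨by omega, hmid⟩ (Nat.lt_succ_self i)
    omega
  · rw [fpfStd_apply_of_lt hz (not_le.1 hmid)] at hlt_self
    have := le_tailSwap_apply_add_one (m := n + (fixedPtsIn n z).card) (i + 1)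
    omega

end Standardization

section Truncation

variable {n : ℕ}

/-- Keeps the values of `y` on the pairs `{x, y x}` contained in `{0, …, n}` and fixes every other
point; for an involution `y` this removes all cycles not contained in `{0, …, n}`. -/
def truncateFun (n : ℕ) (y : ℕ → ℕ) (x : ℕ) : ℕ := if x ≤ n ∧ y x ≤ n then y x else x

theorem truncateFun_involutive (n : ℕ) {y : ℕ → ℕ} (hy : Involutive y) :
    Involutive (truncateFun n y) := by
  intro x
  grind [truncateFun, hy x]

theorem truncateFun_fpfStd {z : Perm ℕ} (hz : z ∈ InvolIn n) :
    truncateFun n (fpfStd n z) = z := by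
  ext x
  by_cases hx : x ≤ n
  · by_cases hfix : x ∈ fixedPtsIn n z
    · rw [truncateFun, if_neg fun h => (lt_fpfStd_apply hz hfix).not_ge h.2]
      exact (mem_fixedPtsIn.1 hfix).2.symm
    · have hzx : z x ≤ n := by
        rcases Nat.eq_zero_or_pos x with rfl | hpos
        · exact hz.1.trans_le (Nat.zero_le n)
        · exact (Finset.mem_Icc.1 (InvolIn.apply_mem_Icc hz (Finset.mem_Icc.2 ⟨hpos, hx⟩))).2
      rw [truncateFun, fpfStd_apply_of_notMem hx hfix, if_pos ⟨hx, hzx⟩]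
  · rw [truncateFun, if_neg fun h => hx h.1, hz.2.2 x (not_le.1 hx)]

theorem injOn_fpfStd (n : ℕ) : Set.InjOn (fpfStd n) (InvolIn n) := fun z hz w hw h =>
  DFunLike.coe_injective (by rw [← truncateFun_fpfStd hz, ← truncateFun_fpfStd hw, h])

/-- The involution obtained from an involution `y` by fixing every point of the cycles of `y` not
contained in `{0, …, n}`. -/
def truncate (n : ℕ) {y : ℕ → ℕ} (hy : Involutive y) : Perm ℕ :=
  (truncateFun_involutive n hy).toPerm

variable {y : ℕ → ℕ}

theorem truncate_mem_InvolIn (hy : Involutive y) (hzero : y 0 = 0) :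
    truncate n hy ∈ InvolIn n :=
  ⟨(if_pos ⟨Nat.zero_le n, hzero.trans_le (Nat.zero_le n)⟩).trans hzero,
    Equiv.ext (truncateFun_involutive n hy), fun _ hx => if_neg fun h => hx.not_ge h.1⟩

theorem mem_fixedPtsIn_truncate (hy : Involutive y) (hzero : y 0 = 0)
    (hfpf : ∀ i, 1 ≤ i → y i ≠ i) {x : ℕ} :
    x ∈ fixedPtsIn n (truncate n hy) ↔ x ≤ n ∧ n < y x := by
  rw [mem_fixedPtsIn]
  change (1 ≤ x ∧ x ≤ n) ∧ truncateFun n y x = x ↔ x ≤ n ∧ n < y x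
  grind [truncateFun]

end Truncation

section NoVisibleDescent

variable {n : ℕ} {y : Perm ℕ}

theorem apply_lt_apply_succ_of_no_visibleDescent (hdesc : ∀ i, visibleDescent y i → i ≤ n) {i : ℕ}
    (hni : n < i) (hi : y (i + 1) < i) : y i < y (i + 1) := by
  by_contra! hle
  have hne : y (i + 1) ≠ y i := y.injective.ne (Nat.succ_ne_self i)
  exact hni.not_ge (hdesc i ⟨by omega, lt_min hi (lt_of_le_of_ne hle hne)⟩)

theorem apply_lt_apply_of_no_visibleDescent (hdesc : ∀ i, visibleDescent y i → i ≤ n) {i j : ℕ}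
    (hni : n < i) (hij : i < j) (hj : y j + 1 < j) : y i < y j := by
  induction j, hij using Nat.le_induction with
  | base => exact apply_lt_apply_succ_of_no_visibleDescent hdesc hni (Nat.lt_of_succ_lt_succ hj)
  | succ j hij ih =>
    have hstep : y j < y (j + 1) :=
      apply_lt_apply_succ_of_no_visibleDescent hdesc (by omega) (Nat.lt_of_succ_lt_succ hj)
    exact (ih (by omega)).trans hstep

theorem apply_add_one_eq_of_no_visibleDescent (hdesc : ∀ i, visibleDescent y i → i ≤ n)
    (hy : Involutive y) {j : ℕ} (hnj : n < y j) (hj : y j < j) : y j + 1 = j := by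
  by_contra hne
  have := apply_lt_apply_of_no_visibleDescent hdesc hnj hj (by omega)
  rw [hy j] at this
  omega

theorem mem_image_fixedPtsIn_truncate (hy : Involutive y) (hzero : y 0 = 0)
    (hfpf : ∀ i, 1 ≤ i → y i ≠ i) {j : ℕ} :
    j ∈ (fixedPtsIn n (truncate n hy)).image y ↔ n < j ∧ y j ≤ n := by
  simp only [Finset.mem_image, mem_fixedPtsIn_truncate hy hzero hfpf]
  exact ⟨by rintro ⟨x, ⟨hx, hyx⟩, rfl⟩; exact ⟨hyx, (hy x).trans_le hx⟩,
    fun ⟨hj, hyj⟩ => ⟨y j, ⟨hyj, hj.trans_eq (hy j).symm⟩, hy j⟩⟩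

theorem image_fixedPtsIn_truncate (hdesc : ∀ i, visibleDescent y i → i ≤ n) (hy : Involutive y)
    (hzero : y 0 = 0) (hfpf : ∀ i, 1 ≤ i → y i ≠ i) :
    (fixedPtsIn n (truncate n hy)).image y =
      Finset.Ioc n (n + (fixedPtsIn n (truncate n hy)).card) := by
  rw [← Finset.card_image_of_injective _ y.injective]
  refine eq_Ioc_of_forall_Ioc_subset fun j hj => ?_
  obtain ⟨hnj, hyj⟩ := (mem_image_fixedPtsIn_truncate hy hzero hfpf).1 hj
  refine ⟨hnj, fun i hi => (mem_image_fixedPtsIn_truncate hy hzero hfpf).2 ?_⟩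
  obtain ⟨hni, hij⟩ := Finset.mem_Ioc.1 hi
  rcases hij.eq_or_lt with rfl | hij
  · exact ⟨hni, hyj⟩
  · exact ⟨hni, (apply_lt_apply_of_no_visibleDescent hdesc hni hij (by omega)).le.trans hyj⟩

theorem apply_le_iff_le_add_card (hdesc : ∀ i, visibleDescent y i → i ≤ n) (hy : Involutive y)
    (hzero : y 0 = 0) (hfpf : ∀ i, 1 ≤ i → y i ≠ i) {j : ℕ} (hnj : n < j) :
    y j ≤ n ↔ j ≤ n + (fixedPtsIn n (truncate n hy)).card := by
  have hIoc := mem_image_fixedPtsIn_truncate (n := n) hy hzero hfpf (j := j)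
  rw [image_fixedPtsIn_truncate hdesc hy hzero hfpf, Finset.mem_Ioc] at hIoc
  simpa only [hnj, true_and] using hIoc.symm

theorem orderEmbOfFin_fixedPtsIn_truncate (hdesc : ∀ i, visibleDescent y i → i ≤ n)
    (hy : Involutive y) (hzero : y 0 = 0) (hfpf : ∀ i, 1 ≤ i → y i ≠ i)
    (t : Fin (fixedPtsIn n (truncate n hy)).card) :
    (fixedPtsIn n (truncate n hy)).orderEmbOfFin rfl t = y (n + t + 1) := by
  have hle : ∀ s : Fin (fixedPtsIn n (truncate n hy)).card, y (n + s + 1) ≤ n := fun s =>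
    (apply_le_iff_le_add_card hdesc hy hzero hfpf (by omega)).2 (by omega)
  have hmem : ∀ s : Fin (fixedPtsIn n (truncate n hy)).card,
      y (n + s + 1) ∈ fixedPtsIn n (truncate n hy) := fun s =>
    (mem_fixedPtsIn_truncate hy hzero hfpf).2 ⟨hle s, by rw [hy]; omega⟩
  have hmono : StrictMono fun s : Fin (fixedPtsIn n (truncate n hy)).card => y (n + s + 1) :=
    fun r s hrs => by
      have := hle s
      exact apply_lt_apply_of_no_visibleDescent hdesc (by omega) (by omega) (by omega)
  exact (congrFun (Finset.orderEmbOfFin_unique rfl hmem hmono) t).symm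

theorem apply_eq_tailSwap_of_no_visibleDescent (hdesc : ∀ i, visibleDescent y i → i ≤ n)
    (hy : Involutive y) (hzero : y 0 = 0) (hfpf : ∀ i, 1 ≤ i → y i ≠ i) {j : ℕ}
    (hj : n + (fixedPtsIn n (truncate n hy)).card < j) :
    y j = tailSwap (n + (fixedPtsIn n (truncate n hy)).card) j := by
  have hlt : ∀ i, n + (fixedPtsIn n (truncate n hy)).card < i → n < y i := fun i hi =>
    not_le.1 (mt (apply_le_iff_le_add_card hdesc hy hzero hfpf (by omega)).1 hi.not_ge)
  refine eq_tailSwap_apply_of_adjacent hy (fun i hi => ?_) (fun i hi => ?_) hj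
  · refine not_le.1 (mt (apply_le_iff_le_add_card hdesc hy hzero hfpf (hlt i hi)).2 ?_)
    rw [hy i]
    omega
  · rcases (hfpf i (by omega)).lt_or_gt with hlow | hhigh
    · exact .inr (apply_add_one_eq_of_no_visibleDescent hdesc hy (hlt i hi) hlow)
    · have := apply_add_one_eq_of_no_visibleDescent hdesc hy (j := y i)
      rw [hy i] at this
      exact .inl (this (by omega) hhigh).symm

theorem fpfStd_truncate_apply_of_lt (hdesc : ∀ i, visibleDescent y i → i ≤ n) (hy : Involutive y)
    (hzero : y 0 = 0) (hfpf : ∀ i, 1 ≤ i → y i ≠ i) {j : ℕ} (hj : n < j) :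
    fpfStd n (truncate n hy) j = y j := by
  by_cases hmid : j ≤ n + (fixedPtsIn n (truncate n hy)).card
  · obtain ⟨t, rfl⟩ : ∃ t : Fin (fixedPtsIn n (truncate n hy)).card, n + (t : ℕ) + 1 = j :=
      exists_fin_add_one_eq ⟨hj, hmid⟩
    rw [fpfStd_apply_add, orderEmbOfFin_fixedPtsIn_truncate hdesc hy hzero hfpf]
  · rw [fpfStd_apply_of_lt (truncate_mem_InvolIn hy hzero) (not_le.1 hmid),
      apply_eq_tailSwap_of_no_visibleDescent hdesc hy hzero hfpf (not_le.1 hmid)]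

theorem fpfStd_truncate (hdesc : ∀ i, visibleDescent y i → i ≤ n) (hy : Involutive y)
    (hzero : y 0 = 0) (hfpf : ∀ i, 1 ≤ i → y i ≠ i) : fpfStd n (truncate n hy) = y := by
  ext x
  by_cases hx : n < x
  · exact fpfStd_truncate_apply_of_lt hdesc hy hzero hfpf hx
  by_cases hyx : n < y x
  · have hinvol := involutive_of_mul_self_eq_one
      (fpfStd_mul_self (truncate_mem_InvolIn (n := n) hy hzero))
    rw [hinvol.eq_iff, fpfStd_truncate_apply_of_lt hdesc hy hzero hfpf hyx, hy x]
  · rw [fpfStd_apply_of_notMem (not_lt.1 hx)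
      fun hfix => hyx ((mem_fixedPtsIn_truncate hy hzero hfpf).1 hfix).2]
    exact if_pos ⟨not_lt.1 hx, not_lt.1 hyx⟩

end NoVisibleDescent

/-- For `n ≥ 1`, the fixed-point-free standardization `FPF_n` sends every
involution in `I_n` into `I^FPF_∞`, and it is a bijection from `I_n` onto the set of
elements of `I^FPF_∞` with no visible descent greater than `n`. -/
theorem statement1 (n : ℕ) (hn : 1 ≤ n) :
    (∀ z ∈ InvolIn n, fpfStd n z ∈ IFPFInfty) ∧
      Set.BijOn (fpfStd n) (InvolIn n)
        {z | z ∈ IFPFInfty ∧ ∀ i : ℕ, visibleDescent z i → i ≤ n} := by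
  refine ⟨fun z => fpfStd_mem_IFPFInfty, fun z hz =>
    ⟨fpfStd_mem_IFPFInfty hz, fun i => le_of_visibleDescent_fpfStd hz⟩, injOn_fpfStd n, ?_⟩
  rintro y ⟨⟨hzero, hfpf, hsq, -⟩, hdesc⟩
  have hy : Involutive y := involutive_of_mul_self_eq_one hsq
  exact ⟨truncate n hy, truncate_mem_InvolIn hy hzero, fpfStd_truncate hdesc hy hzero hfpf⟩

end Paper
end

section
/- Let n >= 1 and suppose y, z in FPF_n(I_n) satisfy r_y(i,j) <= r_z(i,j) for all i,j in [n]. Then r_y(i,j) <= r_z(i,j) for all i,j in [2n]. -/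
namespace Paper

/-!
Let `i ≤ j` and `n ≤ j`. If `r_z(i,j) < i`, some `a ∈ [i]` has `z(a) > j`, and then `z(j+1) ∈ [i]`,
for otherwise `(j+1, a)` would be a cell of `D^ss(z)` below row `n`. Hence, to the right of
column `n`, row `i` of the rank table of `z` grows at the maximal rate until it reaches its maximal
value `i`, so an inequality `r_y ≤ r_z` propagates to the right from column `max i n`. Along the
diagonal the same growth gives `r_y(i,i) ≤ r_z(i,i) + 1` from the inequality at `(n,n)`; both ranks
are even because the involutions have no fixed points, which removes the error `1`.
-/

section Rank

variable (w : Equiv.Perm ℕ) (i j : ℕ)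

lemma rnk_inv : rnk w⁻¹ i j = rnk w j i :=
  Finset.card_equiv w⁻¹ fun a => by
    simp only [Finset.mem_filter, Equiv.Perm.inv_def, Equiv.apply_symm_apply]
    exact and_comm

lemma rnk_le_left : rnk w i j ≤ i :=
  (Finset.card_filter_le _ _).trans_eq (Nat.card_Icc 1 i)

lemma rnk_le_right : rnk w i j ≤ j :=
  rnk_inv w j i ▸ rnk_le_left w⁻¹ j i

lemma rnk_succ_left :
    rnk w (i + 1) j = rnk w i j + if w (i + 1) ∈ Finset.Icc 1 j then 1 else 0 := by
  have last_notMem : i + 1 ∉ (Finset.Icc 1 i).filter fun a => w a ∈ Finset.Icc 1 j := by simp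
  rw [rnk, ← Finset.insert_Icc_right_eq_Icc_add_one (Nat.le_add_left 1 i), Finset.filter_insert]
  split_ifs
  · rw [Finset.card_insert_of_notMem last_notMem, rnk]
  · rfl

lemma rnk_succ_right :
    rnk w i (j + 1) = rnk w i j + if w⁻¹ (j + 1) ∈ Finset.Icc 1 i then 1 else 0 := by
  rw [← rnk_inv, rnk_succ_left, rnk_inv]

lemma rnk_add_right_le (k : ℕ) : rnk w i (j + k) ≤ rnk w i j + k := by
  induction k with
  | zero => rfl
  | succ k ih =>
    rw [← add_assoc, rnk_succ_right]
    split_ifs <;> omega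

lemma rnk_add_left_le (k : ℕ) : rnk w (i + k) j ≤ rnk w i j + k := by
  simpa only [rnk_inv] using rnk_add_right_le w⁻¹ j i k

lemma rnk_add_add_le (k : ℕ) : rnk w (i + k) (j + k) ≤ rnk w i j + 2 * k := by
  have rows := rnk_add_left_le w i (j + k) k
  have columns := rnk_add_right_le w i j k
  omega

end Rank

section Involution

variable {w : Equiv.Perm ℕ} {n i j : ℕ}

lemma rnk_comm (hw : Function.Involutive w) (i j : ℕ) : rnk w i j = rnk w j i := by
  rw [← rnk_inv, Equiv.Perm.inv_def, hw.symm_eq_self_of_involutive]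

lemma rnk_succ_right_of_involutive (hw : Function.Involutive w) (i j : ℕ) :
    rnk w i (j + 1) = rnk w i j + if w (j + 1) ∈ Finset.Icc 1 i then 1 else 0 := by
  rw [rnk_comm hw, rnk_succ_left, rnk_comm hw]

lemma even_rnk_self (hw : Function.Involutive w) (hfix : ∀ a, 1 ≤ a → w a ≠ a) (i : ℕ) :
    Even (rnk w i i) := by
  rw [← ZMod.natCast_eq_zero_iff_even, rnk, Finset.card_eq_sum_ones, Nat.cast_sum]
  refine Finset.sum_involution (fun a _ => w a) (fun _ _ => by decide) (fun a ha _ => ?_)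
    (fun a ha => ?_) (fun a _ => hw a)
  · exact hfix a (Finset.mem_Icc.1 (Finset.mem_filter.1 ha).1).1
  · rw [Finset.mem_filter, hw a]
    exact (Finset.mem_filter.1 ha).symm

lemma apply_pos (h0 : w 0 = 0) {a : ℕ} (ha : 1 ≤ a) : 1 ≤ w a :=
  Nat.pos_of_ne_zero fun h => (Nat.pos_iff_ne_zero.1 ha) (w.injective (h.trans h0.symm))

lemma exists_lt_apply_of_rnk_lt (h0 : w 0 = 0) (h : rnk w i j < i) :
    ∃ a ∈ Finset.Icc 1 i, j < w a := by
  by_contra! bounded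
  have rnk_eq : rnk w i j = i := by
    rw [rnk, Finset.filter_true_of_mem fun a ha =>
      Finset.mem_Icc.2 ⟨apply_pos h0 (Finset.mem_Icc.1 ha).1, bounded a ha⟩, Nat.card_Icc,
      Nat.add_sub_cancel]
  exact h.ne rnk_eq

lemma apply_succ_mem_Icc_of_rnk_lt (h0 : w 0 = 0) (hw : Function.Involutive w)
    (hD : Dss w ⊆ Set.Icc 1 n ×ˢ Set.Icc 1 n) (hij : i ≤ j) (hnj : n ≤ j)
    (h : rnk w i j < i) : w (j + 1) ∈ Finset.Icc 1 i := by
  obtain ⟨a, ha, hja⟩ := exists_lt_apply_of_rnk_lt h0 h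
  rw [Finset.mem_Icc] at ha ⊢
  refine ⟨apply_pos h0 (Nat.le_add_left 1 j), ?_⟩
  by_contra! hi
  have ne_succ : w a ≠ j + 1 := fun hwa => by
    have : w (j + 1) = a := hwa ▸ hw a
    omega
  have mem_Dss : (j + 1, a) ∈ Dss w :=
    ⟨ha.1, show a < w (j + 1) by omega, show a < j + 1 by omega, show j + 1 < w a by omega⟩
  have row_le : j + 1 ≤ n := (hD mem_Dss).1.2
  omega

lemma min_le_rnk_add_right (h0 : w 0 = 0) (hw : Function.Involutive w)
    (hD : Dss w ⊆ Set.Icc 1 n ×ˢ Set.Icc 1 n) (hij : i ≤ j) (hnj : n ≤ j) (k : ℕ) :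
    min i (rnk w i j + k) ≤ rnk w i (j + k) := by
  induction k with
  | zero => exact min_le_right _ _
  | succ k ih =>
    have growth := apply_succ_mem_Icc_of_rnk_lt h0 hw hD
      (hij.trans (Nat.le_add_right j k)) (hnj.trans (Nat.le_add_right j k))
    rw [← add_assoc j, rnk_succ_right_of_involutive hw]
    split_ifs with hmem
    · omega
    · have := mt growth hmem
      omega

lemma rnk_self_add_two_le_of_rnk_lt (h0 : w 0 = 0) (hw : Function.Involutive w)
    (hD : Dss w ⊆ Set.Icc 1 n ×ˢ Set.Icc 1 n) (hni : n ≤ i) (h : rnk w i i < i) :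
    rnk w i i + 2 ≤ rnk w (i + 1) (i + 1) := by
  have hmem := apply_succ_mem_Icc_of_rnk_lt h0 hw hD le_rfl hni h
  have hmem' : w (i + 1) ∈ Finset.Icc 1 (i + 1) :=
    Finset.Icc_subset_Icc_right (Nat.le_succ i) hmem
  rw [rnk_succ_left, if_pos hmem', rnk_succ_right_of_involutive hw, if_pos hmem]

lemma min_le_rnk_add_add_self (h0 : w 0 = 0) (hw : Function.Involutive w)
    (hD : Dss w ⊆ Set.Icc 1 n ×ˢ Set.Icc 1 n) (hni : n ≤ i) (k : ℕ) :
    min (i + k) (rnk w i i + 2 * k) ≤ rnk w (i + k) (i + k) + 1 := by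
  induction k with
  | zero => exact (min_le_right _ _).trans (Nat.le_succ _)
  | succ k ih =>
    have growth := rnk_self_add_two_le_of_rnk_lt h0 hw hD (hni.trans (Nat.le_add_right i k))
    have mono : rnk w (i + k) (i + k) ≤ rnk w (i + k + 1) (i + k + 1) := by
      rw [rnk_succ_left, rnk_succ_right]
      omega
    rw [← add_assoc i]
    by_cases hlt : rnk w (i + k) (i + k) < i + k
    · have := growth hlt
      omega
    · omega

end Involution

/-- Fixed-point-free involutions of the positive integers, encoded like `IFPFInfty` but without the
condition of agreeing with `1_FPF` at all large inputs. -/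
structure IsFPFInvolution (w : Equiv.Perm ℕ) : Prop where
  map_zero : w 0 = 0
  apply_ne : ∀ i, 1 ≤ i → w i ≠ i
  involutive : Function.Involutive w

lemma isFPFInvolution_of_mem_FPFIn {n : ℕ} {w : Equiv.Perm ℕ} (hw : w ∈ FPFIn n) :
    IsFPFInvolution w :=
  let ⟨⟨map_zero, apply_ne, mul_self, _⟩, _⟩ := hw
  ⟨map_zero, apply_ne, DFunLike.congr_fun mul_self⟩

section Comparison

variable {y z : Equiv.Perm ℕ} {n i j : ℕ}

lemma rnk_add_right_le_rnk_add_right (h0 : z 0 = 0) (hz : Function.Involutive z)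
    (hD : Dss z ⊆ Set.Icc 1 n ×ˢ Set.Icc 1 n) (hij : i ≤ j) (hnj : n ≤ j)
    (h : rnk y i j ≤ rnk z i j) (k : ℕ) : rnk y i (j + k) ≤ rnk z i (j + k) :=
  calc
    rnk y i (j + k) ≤ min i (rnk y i j + k) :=
      le_min (rnk_le_left y i (j + k)) (rnk_add_right_le y i j k)
    _ ≤ min i (rnk z i j + k) := by gcongr
    _ ≤ rnk z i (j + k) := min_le_rnk_add_right h0 hz hD hij hnj k

lemma rnk_add_self_le_rnk_add_self (hy : IsFPFInvolution y) (hz : IsFPFInvolution z)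
    (hD : Dss z ⊆ Set.Icc 1 n ×ˢ Set.Icc 1 n) (h : rnk y n n ≤ rnk z n n) (k : ℕ) :
    rnk y (n + k) (n + k) ≤ rnk z (n + k) (n + k) := by
  have le_succ : rnk y (n + k) (n + k) ≤ rnk z (n + k) (n + k) + 1 :=
    calc
      rnk y (n + k) (n + k) ≤ min (n + k) (rnk y n n + 2 * k) :=
        le_min (rnk_le_left y _ _) (rnk_add_add_le y n n k)
      _ ≤ min (n + k) (rnk z n n + 2 * k) := by gcongr
      _ ≤ rnk z (n + k) (n + k) + 1 :=
        min_le_rnk_add_add_self hz.map_zero hz.involutive hD le_rfl k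
  obtain ⟨p, hp⟩ := even_rnk_self hy.involutive hy.apply_ne (n + k)
  obtain ⟨q, hq⟩ := even_rnk_self hz.involutive hz.apply_ne (n + k)
  omega

lemma rnk_le_rnk_of_le (hy : IsFPFInvolution y) (hz : IsFPFInvolution z)
    (hD : Dss z ⊆ Set.Icc 1 n ×ˢ Set.Icc 1 n) (h : ∀ i ≤ n, ∀ j ≤ n, rnk y i j ≤ rnk z i j)
    (hij : i ≤ j) : rnk y i j ≤ rnk z i j := by
  rcases le_total j n with hjn | hnj
  · exact h i (hij.trans hjn) j hjn
  rcases le_total i n with hin | hni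
  · obtain ⟨k, rfl⟩ := Nat.exists_eq_add_of_le hnj
    exact rnk_add_right_le_rnk_add_right hz.map_zero hz.involutive hD hin le_rfl
      (h i hin n le_rfl) k
  · obtain ⟨k, rfl⟩ := Nat.exists_eq_add_of_le hni
    obtain ⟨l, rfl⟩ := Nat.exists_eq_add_of_le hij
    exact rnk_add_right_le_rnk_add_right hz.map_zero hz.involutive hD le_rfl hni
      (rnk_add_self_le_rnk_add_self hy hz hD (h n le_rfl n le_rfl) k) l

end Comparison

theorem statement2_general {n : ℕ} {y z : Equiv.Perm ℕ}
    (hy : IsFPFInvolution y) (hz : IsFPFInvolution z)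
    (hD : Dss z ⊆ Set.Icc 1 n ×ˢ Set.Icc 1 n)
    (h : ∀ i j : ℕ, 1 ≤ i → i ≤ n → 1 ≤ j → j ≤ n → rnk y i j ≤ rnk z i j) (i j : ℕ) :
    rnk y i j ≤ rnk z i j := by
  have le_on_square : ∀ i ≤ n, ∀ j ≤ n, rnk y i j ≤ rnk z i j := fun i hi j hj => by
    have row := rnk_le_left y i j
    have column := rnk_le_right y i j
    have inner := h i j
    omega
  rcases le_total i j with hij | hji
  · exact rnk_le_rnk_of_le hy hz hD le_on_square hij
  · rw [rnk_comm hy.involutive, rnk_comm hz.involutive]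
    exact rnk_le_rnk_of_le hy hz hD le_on_square hji

/-- If `y, z ∈ FPF_n(I_n)` satisfy `r_y(i,j) ≤ r_z(i,j)` for all
`i, j ∈ [n]`, then `r_y(i,j) ≤ r_z(i,j)` for all `i, j ∈ [2n]`. -/
theorem statement2 (n : ℕ) (hn : 1 ≤ n) (y z : Equiv.Perm ℕ)
    (hy : y ∈ FPFIn n) (hz : z ∈ FPFIn n)
    (h : ∀ i j : ℕ, 1 ≤ i → i ≤ n → 1 ≤ j → j ≤ n → rnk y i j ≤ rnk z i j) :
    ∀ i j : ℕ, 1 ≤ i → i ≤ 2 * n → 1 ≤ j → j ≤ 2 * n → rnk y i j ≤ rnk z i j := by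
  intro i j _ _ _ _
  exact statement2_general (isFPFInvolution_of_mem_FPFIn hy) (isFPFInvolution_of_mem_FPFIn hz)
    hz.2 h i j

end Paper
end
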